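/- arXiv:1007.0157 — 2 statements merged into one kernel-verified Lean document; each statement's English description precedes it below -/
import Mathlib

section
/- Let F be a free group of finite rank, and let u₁, ..., u_k, v be nontrivial elements of F such that for each i, the elements v and u_i do not lie in conjugate cyclic subgroups. Then for every sufficiently large prime p and every natural number N, there exists a homomorphism φ from F onto a finite p-group such that |φ(u₁)| = |φ(u₂)| = ... = |φ(u_k)| > |φ(v)| > 1 and |φ(u₁)| > N. -/
open Subgroup

/-- `x` and `y` lie in conjugate cyclic subgroups: some conjugate of `⟨x⟩`
and `⟨y⟩` are contained in a common cyclic subgroup. -/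
def InConjCyclic {G : Type} [Group G] (x y : G) : Prop :=
  ∃ (g z : G), (Subgroup.zpowers x).map (MulAut.conj g).toMonoidHom ≤ Subgroup.zpowers z ∧
    Subgroup.zpowers y ≤ Subgroup.zpowers z

/-!
For every large prime `p` there is a finite quotient `Q` of exponent `p` in which any given
finitely many words survive: a word with syllables `x₁ ^ m₁, …, xₙ ^ mₙ` is detected by
unitriangular matrices over `ZMod p` in which `x` acts by `1 + N x`, where `N x` has ones at those
superdiagonal places `l` with `x = xₗ`, the upper right entry of the image of the word being
`m₁ ⋯ mₙ`.

Let `z` be a root of `u` that is not a proper power. If `Q` is chosen well, `z ^ p` traces a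
closed path in the Cayley graph of `Q` that uses no edge twice. If the path of `v ^ p` starting at
some point of `Q` covered this path, the two would run along each other, and `u` would commute
with a conjugate of `v`. Hence every translate of the path of `v ^ p` misses some edge of the path
of `z ^ p`.

For `p ^ e` at least the order of `Q`, a unitriangular matrix of size `p ^ e + 1` over `ZMod p`
has trivial `p ^ e`-th power if and only if one of its superdiagonal entries vanishes. Reserve one
superdiagonal place for each translate and label the edges of the Cayley graph by matrices such
that the entry at this place is `1` on the edge missed by the translate and `0` on all others. In
the wreath product with `Q`, the labels multiplied along the path of `z ^ p` have no vanishing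
superdiagonal entry, whereas those along any translate of the path of `v ^ p` have one, so the
order of `z`, and with it that of `u`, exceeds that of `v`. As `e` may be any large number, the
quotients for finitely many `u` can be combined into one.
-/

open Filter

section Unitriangular

theorem partialProd_last {M : Type*} [Monoid M] {n : ℕ} (f : Fin n → M) :
    Fin.partialProd f (Fin.last n) = (List.ofFn f).prod := by
  simp [Fin.partialProd, List.take_of_length_le]

theorem mul_sub_one_eq {S : Type*} [Ring S] (a b : S) :
    a * b - 1 = (a - 1) * (b - 1) + (a - 1) + (b - 1) := by
  noncomm_ring

variable {n : ℕ} {R : Type*} [CommRing R]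

/-- The square matrix `A` is supported on and above its `k`-th superdiagonal. -/
def SupportedFrom (k : ℕ) (A : Matrix (Fin n) (Fin n) R) : Prop :=
  ∀ i j : Fin n, (j : ℕ) < i + k → A i j = 0

namespace SupportedFrom

variable {a b : ℕ} {A B : Matrix (Fin n) (Fin n) R}

theorem add (hA : SupportedFrom a A) (hB : SupportedFrom a B) : SupportedFrom a (A + B) :=
  fun i j hij => by rw [Matrix.add_apply, hA i j hij, hB i j hij, add_zero]

theorem neg (hA : SupportedFrom a A) : SupportedFrom a (-A) :=
  fun i j hij => by rw [Matrix.neg_apply, hA i j hij, neg_zero]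

theorem one : SupportedFrom 0 (1 : Matrix (Fin n) (Fin n) R) :=
  fun _ _ hij => Matrix.one_apply_ne (Fin.ne_of_gt hij)

theorem mono (hA : SupportedFrom a A) (hba : b ≤ a) : SupportedFrom b A :=
  fun i j hij => hA i j (by lia)

theorem eq_zero (hA : SupportedFrom a A) (hna : n ≤ a) : A = 0 := by
  ext i j
  exact hA i j (by lia)

theorem mul (hA : SupportedFrom a A) (hB : SupportedFrom b B) : SupportedFrom (a + b) (A * B) := by
  intro i j hij
  rw [Matrix.mul_apply]
  refine Finset.sum_eq_zero fun x _ => ?_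
  by_cases hx : (x : ℕ) < i + a
  · rw [hA i x hx, zero_mul]
  · rw [hB x j (by lia), mul_zero]

theorem pow (hA : SupportedFrom 1 A) (k : ℕ) : SupportedFrom k (A ^ k) := by
  induction k with
  | zero => simpa using one
  | succ k ih => simpa only [pow_succ] using ih.mul hA

theorem inv {U : (Matrix (Fin n) (Fin n) R)ˣ} (hU : SupportedFrom 0 U.val) :
    SupportedFrom 0 U⁻¹.val := by
  have hU' : U.val.BlockTriangular id := fun i j hij => hU i j hij
  have : Invertible U.val := U.invertible
  rw [Matrix.coe_units_inv]
  exact fun i j hij => Matrix.blockTriangular_inv_of_blockTriangular hU' hij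

theorem pow_apply_zero {A : Matrix (Fin (n + 1)) (Fin (n + 1)) R} (hA : SupportedFrom 1 A)
    (k : Fin (n + 1)) :
    (A ^ (k : ℕ)) 0 k = Fin.partialProd (fun l : Fin n => A l.castSucc l.succ) k := by
  induction k using Fin.induction with
  | zero => simp
  | succ l ih =>
    rw [Fin.partialProd_succ, ← ih, Fin.val_succ, pow_succ, Matrix.mul_apply,
      Finset.sum_eq_single l.castSucc, Fin.val_castSucc]
    · intro x _ hx
      rcases lt_or_gt_of_ne hx with h | h
      · rw [hA.pow l 0 x (by simpa [Fin.lt_def] using h), zero_mul]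
      · rw [hA x l.succ (by simpa [Fin.lt_def] using h), mul_zero]
    · simp

theorem pow_eq_zero_iff [IsDomain R] {A : Matrix (Fin (n + 1)) (Fin (n + 1)) R}
    (hA : SupportedFrom 1 A) : A ^ n = 0 ↔ ∃ l : Fin n, A l.castSucc l.succ = 0 := by
  have corner : (A ^ n) 0 (Fin.last n) = ∏ l : Fin n, A l.castSucc l.succ := by
    simpa [partialProd_last, List.prod_ofFn] using hA.pow_apply_zero (Fin.last n)
  have : A ^ n = 0 ↔ (A ^ n) 0 (Fin.last n) = 0 := by
    refine ⟨fun h => by rw [h, Matrix.zero_apply], fun h => ?_⟩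
    ext i j
    by_cases hij : (j : ℕ) < i + n
    · exact hA.pow n i j hij
    · obtain rfl : i = 0 := Fin.ext (by simp only [Fin.val_zero]; lia)
      obtain rfl : j = Fin.last n := Fin.ext (by simp only [Fin.val_last]; lia)
      exact h
  simp [this, corner, Finset.prod_eq_zero_iff]

end SupportedFrom

/-- The `(n + 1) × (n + 1)` matrix with superdiagonal `a` and zeros elsewhere. -/
def superdiagonal (a : Fin n → R) : Matrix (Fin (n + 1)) (Fin (n + 1)) R :=
  ∑ l, .single l.castSucc l.succ (a l)

namespace superdiagonal

variable {a : Fin n → R}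

theorem apply_succ (i : Fin (n + 1)) (l : Fin n) :
    superdiagonal a i l.succ = if i = l.castSucc then a l else 0 := by
  simp [superdiagonal, Matrix.sum_apply, Matrix.single_apply, @eq_comm _ i, and_comm, ite_and]

theorem supportedFrom_one : SupportedFrom 1 (superdiagonal a) := by
  intro i j hij
  refine Fin.cases ?_ (fun l hl => ?_) j hij
  · simp [superdiagonal, Matrix.sum_apply]
  · rw [apply_succ, if_neg (by rintro rfl; simp at hl)]

theorem mul_apply_succ (A : Matrix (Fin (n + 1)) (Fin (n + 1)) R) (i : Fin (n + 1)) (l : Fin n) :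
    (A * superdiagonal a) i l.succ = A i l.castSucc * a l := by
  simp [Matrix.mul_apply, apply_succ]

theorem mul_self_eq_zero (ha : ∀ k l : Fin n, k.succ = l.castSucc → a k * a l = 0) :
    superdiagonal a * superdiagonal a = 0 := by
  simp only [superdiagonal, Finset.sum_mul_sum]
  refine Finset.sum_eq_zero fun k _ => Finset.sum_eq_zero fun l _ => ?_
  by_cases hkl : k.succ = l.castSucc
  · rw [hkl, Matrix.single_mul_single_same, ha k l hkl, Matrix.single_zero]
  · exact Matrix.single_mul_single_of_ne _ _ _ _ hkl _

theorem intCast_mul (m : ℤ) :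
    (m : Matrix (Fin (n + 1)) (Fin (n + 1)) R) * superdiagonal a =
      superdiagonal fun l => (m : R) * a l := by
  simp [superdiagonal, Finset.mul_sum, ← zsmul_eq_mul, Matrix.smul_single]

end superdiagonal

variable (n R) in
/-- The group of upper unitriangular `n × n` matrices over `R`. -/
def unitriangular : Subgroup (Matrix (Fin n) (Fin n) R)ˣ where
  carrier := {A | SupportedFrom 1 (A.val - 1)}
  one_mem' := fun i j _ => by simp
  mul_mem' := by
    intro A B hA hB
    rw [Set.mem_ofPred_eq, Units.val_mul, mul_sub_one_eq]
    exact (((hA.mul hB).mono (by lia)).add hA).add hB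
  inv_mem' := by
    intro A hA
    have hA₀ : SupportedFrom 0 A.val := by
      simpa using (hA.mono zero_le_one).add SupportedFrom.one
    have : A⁻¹.val - 1 = -((A.val - 1) * A⁻¹.val) := by
      rw [sub_mul, Units.mul_inv, one_mul, neg_sub]
    rw [Set.mem_ofPred_eq, this]
    exact (hA.mul hA₀.inv).neg

namespace unitriangular

theorem exists_val_eq_one_add {N : Matrix (Fin n) (Fin n) R} (hN : SupportedFrom 1 N) :
    ∃ A : unitriangular n R, A.val.val = 1 + N := by
  obtain ⟨A, hA⟩ := IsNilpotent.isUnit_one_add (r := N) ⟨n, (hN.pow n).eq_zero le_rfl⟩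
  exact ⟨⟨A, show SupportedFrom 1 _ by simpa [hA] using hN⟩, hA⟩

theorem pow_prime_pow_eq_one_iff {p : ℕ} [Fact p.Prime] (A : unitriangular n (ZMod p)) (e : ℕ) :
    A ^ p ^ e = 1 ↔ (A.val.val - 1) ^ p ^ e = 0 := by
  rcases n.eq_zero_or_pos with rfl | hn
  · exact iff_of_true (Subsingleton.elim _ _) (Subsingleton.elim _ _)
  have : Nonempty (Fin n) := ⟨⟨0, hn⟩⟩
  rw [sub_pow_char_pow_of_commute p (n := e) (Commute.one_right _), one_pow, sub_eq_zero,
    Subtype.ext_iff, Units.ext_iff]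
  rfl

theorem pow_prime_pow_eq_one {p : ℕ} [Fact p.Prime] (A : unitriangular n (ZMod p)) {e : ℕ}
    (hn : n ≤ p ^ e) : A ^ p ^ e = 1 :=
  (pow_prime_pow_eq_one_iff A e).2 ((A.2.pow _).eq_zero hn)

/-- The `l`-th superdiagonal entry, as a homomorphism to the additive group of `R`. -/
def superdiag (l : Fin n) : unitriangular (n + 1) R →* Multiplicative R where
  toFun A := .ofAdd ((A.val.val - 1) l.castSucc l.succ)
  map_one' := by simp
  map_mul' A B := by
    rw [← ofAdd_add, Subgroup.coe_mul, Units.val_mul, mul_sub_one_eq, Matrix.add_apply,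
      Matrix.add_apply, A.2.mul B.2 _ _ (by simp), zero_add]

theorem exists_superdiag_eq (a : Fin n → R) :
    ∃ A : unitriangular (n + 1) R, ∀ l, superdiag l A = .ofAdd (a l) := by
  obtain ⟨A, hA⟩ := exists_val_eq_one_add (superdiagonal.supportedFrom_one (a := a))
  exact ⟨A, fun l => by simp [superdiag, hA, superdiagonal.apply_succ]⟩

theorem pow_prime_pow_eq_one_iff_exists_superdiag {p e : ℕ} [Fact p.Prime]
    (A : unitriangular (p ^ e + 1) (ZMod p)) : A ^ p ^ e = 1 ↔ ∃ l, superdiag l A = 1 := by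
  rw [pow_prime_pow_eq_one_iff, SupportedFrom.pow_eq_zero_iff A.2]
  rfl

end unitriangular

end Unitriangular

section Residual

variable {α : Type}

open Monoid in
theorem exists_syllables (g : FreeGroup α) :
    ∃ L : List (α × ℤ), L.IsChain (fun a b => a.1 ≠ b.1) ∧ (∀ a ∈ L, a.2 ≠ 0) ∧
      (L.map fun a => FreeGroup.of a.1 ^ a.2).prod = g := by
  classical
  let toCoprod : FreeGroup α →* CoprodI fun _ : α => Multiplicative ℤ :=
    FreeGroup.lift fun x => CoprodI.of (i := x) (.ofAdd 1)
  let ofCoprod : (CoprodI fun _ : α => Multiplicative ℤ) →* FreeGroup α :=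
    CoprodI.lift fun x => zpowersHom _ (FreeGroup.of x)
  have ofCoprod_toCoprod : ofCoprod.comp toCoprod = .id _ := by ext; simp [ofCoprod, toCoprod]
  let w := CoprodI.Word.equiv (toCoprod g)
  refine ⟨w.toList.map fun a => (a.1, a.2.toAdd), ?_, ?_, ?_⟩
  · simpa [List.isChain_map] using w.chain_ne
  · simp only [List.mem_map]
    rintro _ ⟨a, ha, rfl⟩
    exact w.ne_one a ha
  · have hw : w.prod = toCoprod g := CoprodI.Word.equiv.symm_apply_apply _
    rw [← MonoidHom.id_apply _ g, ← ofCoprod_toCoprod, MonoidHom.comp_apply, ← hw,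
      CoprodI.Word.prod, map_list_prod]
    simp [ofCoprod, Function.comp_def]

theorem val_zpow_of_mul_self_eq_zero {S : Type*} [Ring S] {N : S} (hN : N * N = 0) {U : Sˣ}
    (hU : U.val = 1 + N) (m : ℤ) : (U ^ m).val = 1 + m * N := by
  have hU' : U⁻¹.val = 1 - N := Units.inv_eq_of_mul_eq_one_right (by
    rw [hU]; noncomm_ring; simp [hN])
  induction m with
  | zero => simp
  | succ m ih =>
    rw [zpow_add_one, Units.val_mul, ih, hU]
    push_cast
    linear_combination (norm := noncomm_ring) (m : S) * hN
  | pred m ih =>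
    rw [zpow_sub_one, Units.val_mul, ih, hU']
    push_cast
    linear_combination (norm := noncomm_ring) (m : S) * hN

theorem apply_zero_partialProd {n : ℕ} {R : Type*} [CommRing R] {G : Type*} [Group G]
    {ψ : G →* unitriangular (n + 1) R} {f : Fin n → G} {a : Fin n → Fin n → R}
    (hf : ∀ l, (ψ (f l)).val.val = 1 + superdiagonal (a l)) (k : Fin (n + 1)) :
    (∀ j, k < j → (ψ (Fin.partialProd f k)).val.val 0 j = 0) ∧
      (ψ (Fin.partialProd f k)).val.val 0 k = Fin.partialProd (fun l => a l l) k := by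
  induction k using Fin.induction with
  | zero =>
    refine ⟨fun j hj => ?_, by simp⟩
    simp [Matrix.one_apply_ne hj.ne]
  | succ k ih =>
    have step (l : Fin n) : (ψ (Fin.partialProd f k.succ)).val.val 0 l.succ =
        (ψ (Fin.partialProd f k.castSucc)).val.val 0 l.succ +
          (ψ (Fin.partialProd f k.castSucc)).val.val 0 l.castSucc * a k l := by
      rw [Fin.partialProd_succ, map_mul, Subgroup.coe_mul, Units.val_mul, hf, mul_add, mul_one,
        Matrix.add_apply, superdiagonal.mul_apply_succ]
    refine ⟨fun j hj => ?_, ?_⟩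
    · obtain ⟨l, rfl⟩ := Fin.exists_succ_eq.2 (Fin.ne_zero_of_lt hj)
      have hkl : k < l := Fin.succ_lt_succ_iff.1 hj
      rw [step, ih.1 _ (Fin.castSucc_lt_succ_iff.2 hkl.le),
        ih.1 _ (Fin.castSucc_lt_castSucc_iff.2 hkl), zero_mul, add_zero]
    · rw [step, ih.1 _ Fin.castSucc_lt_succ, ih.2, zero_add, Fin.partialProd_succ]

theorem exists_unitriangular_apply_ne_one {p : ℕ} [Fact p.Prime] {L : List (α × ℤ)} (hL₀ : L ≠ [])
    (hL : L.IsChain fun a b => a.1 ≠ b.1) (hLp : ∀ a ∈ L, (a.2 : ZMod p) ≠ 0) :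
    ∃ ψ : FreeGroup α →* unitriangular (L.length + 1) (ZMod p),
      ψ (L.map fun a => FreeGroup.of a.1 ^ a.2).prod ≠ 1 := by
  classical
  let N (x : α) := superdiagonal fun l : Fin L.length => if L[l].1 = x then (1 : ZMod p) else 0
  have hN (x : α) : N x * N x = 0 := superdiagonal.mul_self_eq_zero fun k l hkl => by
    have : L[k].1 ≠ L[l].1 := by
      have hkl' : (l : ℕ) = k + 1 := by simpa using (congrArg Fin.val hkl).symm
      simpa [hkl'] using List.isChain_iff_getElem.1 hL k (by lia)
    rcases eq_or_ne L[k].1 x with rfl | hk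
    · rw [if_neg this.symm, mul_zero]
    · rw [if_neg hk, zero_mul]
  choose X hX using fun x => unitriangular.exists_val_eq_one_add (N := N x)
    superdiagonal.supportedFrom_one
  let f (l : Fin L.length) : FreeGroup α := FreeGroup.of L[l].1 ^ L[l].2
  have hf (l : Fin L.length) : (FreeGroup.lift X (f l)).val.val = 1 + superdiagonal fun k =>
      (L[l].2 : ZMod p) * if L[k].1 = L[l].1 then 1 else 0 := by
    rw [map_zpow, FreeGroup.lift_apply_of, Subgroup.coe_zpow,
      val_zpow_of_mul_self_eq_zero (hN _) (hX _), superdiagonal.intCast_mul]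
  refine ⟨FreeGroup.lift X, fun h => ?_⟩
  have prod_f : Fin.partialProd f (Fin.last _) = (L.map fun a => FreeGroup.of a.1 ^ a.2).prod := by
    simp [partialProd_last, f, ← List.ofFn_getElem_eq_map]
  have corner := (apply_zero_partialProd hf (Fin.last _)).2
  rw [prod_f, h] at corner
  have : ∏ l : Fin L.length, (L[l].2 : ZMod p) = 0 := by
    simpa [partialProd_last, List.prod_ofFn, hL₀] using corner.symm
  obtain ⟨l, -, hl⟩ := Finset.prod_eq_zero_iff.1 this
  exact hLp _ (List.getElem_mem _) hl

theorem eventually_exists_finite_quotient {g : FreeGroup α} (hg : g ≠ 1) :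
    ∀ᶠ p in atTop, p.Prime → ∃ (Q : Type) (_ : Group Q) (_ : Finite Q) (φ : FreeGroup α →* Q),
      (∀ q : Q, q ^ p = 1) ∧ φ g ≠ 1 := by
  obtain ⟨L, hL, hL₀, rfl⟩ := exists_syllables g
  have exponents : ∀ᶠ p in atTop, ∀ a ∈ L, a.2.natAbs < p :=
    (eventually_all_finite L.finite_toSet).2 fun a _ => eventually_gt_atTop _
  filter_upwards [exponents, eventually_gt_atTop L.length] with p hLp hp hp'
  have : Fact p.Prime := ⟨hp'⟩
  have exponent_ne_zero (a) (ha : a ∈ L) : (a.2 : ZMod p) ≠ 0 := fun h =>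
    hL₀ a ha (Int.eq_zero_of_dvd_of_natAbs_lt_natAbs
      ((ZMod.intCast_zmod_eq_zero_iff_dvd ..).1 h) (hLp a ha))
  obtain ⟨ψ, hψ⟩ :=
    exists_unitriangular_apply_ne_one (by rintro rfl; simp at hg) hL exponent_ne_zero
  refine ⟨_, inferInstance, inferInstance, ψ, fun q => ?_, hψ⟩
  simpa using unitriangular.pow_prime_pow_eq_one q (e := 1) (by simpa using hp)

theorem eventually_exists_finite_quotient_injOn {S : Set (FreeGroup α)} (hS : S.Finite) :
    ∀ᶠ p in atTop, p.Prime → ∃ (Q : Type) (_ : Group Q) (_ : Finite Q) (φ : FreeGroup α →* Q),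
      (∀ q : Q, q ^ p = 1) ∧ S.InjOn φ := by
  have := hS.offDiag.to_subtype
  have separated := eventually_all.2 fun x : S.offDiag =>
    eventually_exists_finite_quotient (div_ne_one.2 x.2.2.2)
  filter_upwards [separated] with p h hp
  choose Q _ _ φ hφ hne using fun x => h x hp
  refine ⟨∀ x, Q x, inferInstance, inferInstance, MonoidHom.pi φ,
    fun q => funext fun x => hφ x (q x), fun a ha b hb hab => ?_⟩
  by_contra hne'
  refine hne ⟨(a, b), ha, hb, hne'⟩ ?_
  rw [map_div, div_eq_one]
  exact congrFun hab _

end Residual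

section Axis

variable {α : Type*}

/-- The letter inverse to a letter `(x, b)`, which stands for `x` or `x⁻¹` according to `b`. -/
def invLetter (a : α × Bool) : α × Bool := (a.1, !a.2)

theorem mk_invLetter (a : α × Bool) : FreeGroup.mk [invLetter a] = (FreeGroup.mk [a])⁻¹ := by
  simp [invLetter, FreeGroup.inv_mk, FreeGroup.invRev]

theorem mk_inj_of_isReduced {L M : List (α × Bool)} (hL : FreeGroup.IsReduced L)
    (hM : FreeGroup.IsReduced M) (h : FreeGroup.mk L = FreeGroup.mk M) : L = M := by
  classical
  simpa only [FreeGroup.toWord_mk, hL.reduce_eq, hM.reduce_eq] using congrArg FreeGroup.toWord h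

/-- An axis of `u` in the Cayley tree of the free group: a bi-infinite geodesic, given by its
vertices and the letters labelling its edges, on which `u` acts as translation by `len > 0`. -/
structure Axis (u : FreeGroup α) where
  vertex : ℤ → FreeGroup α
  letter : ℤ → α × Bool
  len : ℕ
  len_pos : 0 < len
  vertex_add_one (t : ℤ) : vertex (t + 1) = vertex t * FreeGroup.mk [letter t]
  letter_add_one_ne (t : ℤ) : letter (t + 1) ≠ invLetter (letter t)
  vertex_add_len (t : ℤ) : vertex (t + len) = u * vertex t

namespace Axis

variable {u v : FreeGroup α}

theorem vertex_sub_one (γ : Axis u) (t : ℤ) :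
    γ.vertex (t - 1) = γ.vertex t * (FreeGroup.mk [γ.letter (t - 1)])⁻¹ := by
  rw [eq_mul_inv_iff_mul_eq, ← γ.vertex_add_one, sub_add_cancel]

/-- The axis of `u⁻¹` obtained by reversing an axis of `u`. -/
def rev (γ : Axis u) : Axis u⁻¹ where
  vertex t := γ.vertex (-t)
  letter t := invLetter (γ.letter (-t - 1))
  len := γ.len
  len_pos := γ.len_pos
  vertex_add_one t := by rw [mk_invLetter, ← γ.vertex_sub_one, neg_add']
  letter_add_one_ne t h := γ.letter_add_one_ne (-(t + 1) - 1) (by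
    rw [sub_add_cancel, h, neg_add']
    simp [invLetter])
  vertex_add_len t := by
    rw [eq_inv_mul_iff_mul_eq, ← γ.vertex_add_len, neg_add, neg_add_cancel_right]

/-- The translate by `a` of an axis of `u`. -/
def conj (γ : Axis u) (a : FreeGroup α) : Axis (a * u * a⁻¹) where
  vertex t := a * γ.vertex t
  letter := γ.letter
  len := γ.len
  len_pos := γ.len_pos
  vertex_add_one t := by rw [γ.vertex_add_one, mul_assoc]
  letter_add_one_ne := γ.letter_add_one_ne
  vertex_add_len t := by rw [γ.vertex_add_len]; group

theorem mk_letter (γ : Axis u) (t : ℤ) :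
    FreeGroup.mk [γ.letter t] = (γ.vertex t)⁻¹ * γ.vertex (t + 1) := by
  rw [γ.vertex_add_one, inv_mul_cancel_left]

theorem letter_periodic (γ : Axis u) : Function.Periodic γ.letter γ.len := by
  intro t
  have : FreeGroup.mk [γ.letter (t + γ.len)] = FreeGroup.mk [γ.letter t] := by
    rw [mk_letter, mk_letter, add_right_comm, γ.vertex_add_len, γ.vertex_add_len]
    group
  exact List.singleton_inj.1 (mk_inj_of_isReduced .singleton .singleton this)

theorem mk_ofFn_letter (γ : Axis u) (s : ℤ) (k : ℕ) :
    FreeGroup.mk (List.ofFn fun i : Fin k => γ.letter (s + (i : ℕ))) =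
      (γ.vertex s)⁻¹ * γ.vertex (s + k) := by
  induction k with
  | zero => simp [FreeGroup.one_eq_mk]
  | succ k ih =>
    rw [List.ofFn_succ', List.concat_eq_append, ← FreeGroup.mul_mk]
    simp only [Fin.val_castSucc, Fin.val_last]
    rw [ih, mk_letter, Nat.cast_succ, add_assoc]
    group

theorem isReduced_ofFn_letter (γ : Axis u) (s : ℤ) (k : ℕ) :
    FreeGroup.IsReduced (List.ofFn fun i : Fin k => γ.letter (s + (i : ℕ))) := by
  rw [FreeGroup.IsReduced, List.isChain_iff_getElem]
  intro i hi h₁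
  simp only [List.getElem_ofFn] at h₁ ⊢
  have h := γ.letter_add_one_ne (s + i)
  rw [add_assoc] at h
  by_contra h₂
  exact h (Prod.ext h₁.symm (by simpa [invLetter, Bool.eq_not] using Ne.symm h₂))

theorem letter_periodic_of_conj_eq (γ : Axis u) {s t : ℤ}
    (h : (γ.vertex s)⁻¹ * u * γ.vertex s = (γ.vertex t)⁻¹ * u * γ.vertex t) :
    Function.Periodic γ.letter (t - s) := by
  have segments := mk_inj_of_isReduced (γ.isReduced_ofFn_letter s γ.len)
    (γ.isReduced_ofFn_letter t γ.len) (by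
      rwa [mk_ofFn_letter, mk_ofFn_letter, γ.vertex_add_len, γ.vertex_add_len, ← mul_assoc,
        ← mul_assoc])
  have := List.ofFn_injective segments
  have shifted : Function.Periodic (fun i => (γ.letter (s + i), γ.letter (t + i))) (γ.len : ℤ) :=
    fun i => by simp only [← add_assoc, γ.letter_periodic _]
  intro i
  obtain ⟨j, hj, hij⟩ := shifted.exists_mem_Ico₀ (by exact_mod_cast γ.len_pos) (i - s)
  lift j to ℕ using hj.1
  have hj' := congrFun this ⟨j, by simpa using hj.2⟩
  simp only [Prod.mk.injEq] at hij
  simp only [← hij.1, ← hij.2] at hj'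
  rw [add_sub_cancel] at hj'
  rw [hj']
  congr 1
  ring

theorem vertex_add_of_periodic (γ : Axis u) {k : ℤ} (hk : Function.Periodic γ.letter k) (t : ℤ) :
    γ.vertex (t + k) = γ.vertex k * (γ.vertex 0)⁻¹ * γ.vertex t := by
  induction t with
  | zero => simp
  | succ t ih => rw [add_right_comm, γ.vertex_add_one, hk, ih, γ.vertex_add_one, mul_assoc]
  | pred t ih =>
    rw [sub_add_eq_add_sub, γ.vertex_sub_one, add_sub_right_comm, hk, ih, γ.vertex_sub_one,
      mul_assoc]

theorem vertex_add_len_mul (γ : Axis u) (t k : ℤ) :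
    γ.vertex (t + γ.len * k) = u ^ k * γ.vertex t := by
  induction k with
  | zero => simp
  | succ k ih =>
    rw [mul_add_one, ← add_assoc, γ.vertex_add_len, ih, ← mul_assoc, mul_self_zpow]
  | pred k ih =>
    rw [← mul_right_inj u, ← γ.vertex_add_len, add_assoc, ← mul_add_one, sub_add_cancel, ih,
      ← mul_assoc, mul_self_zpow, sub_add_cancel]

theorem exists_primitive_root (γ : Axis u) : ∃ (z : FreeGroup α) (m : ℕ) (δ : Axis z),
    0 < m ∧ z ^ m = u ∧ ∀ k, Function.Periodic δ.letter k → (δ.len : ℤ) ∣ k := by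
  let periods : AddSubgroup ℤ :=
    { carrier := {k | Function.Periodic γ.letter k}
      zero_mem' := fun t => by rw [add_zero]
      add_mem' := fun h k => h.add_period k
      neg_mem' := fun h => h.neg }
  obtain ⟨k, hk⟩ := Int.subgroup_cyclic periods
  have mem_periods (l : ℤ) : Function.Periodic γ.letter l ↔ (k.natAbs : ℤ) ∣ l := by
    rw [Int.natAbs_dvd, ← Int.mem_zmultiples_iff, AddSubgroup.zmultiples_eq_closure, ← hk]; rfl
  obtain ⟨m, hm⟩ := Int.natCast_dvd_natCast.1 ((mem_periods _).1 γ.letter_periodic)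
  have hkm : 0 < k.natAbs * m := hm ▸ γ.len_pos
  let δ : Axis (γ.vertex k.natAbs * (γ.vertex 0)⁻¹) :=
    { γ with
      len := k.natAbs
      len_pos := Nat.pos_of_mul_pos_right hkm
      vertex_add_len := γ.vertex_add_of_periodic ((mem_periods _).2 dvd_rfl) }
  refine ⟨_, m, δ, Nat.pos_of_mul_pos_left hkm, ?_, fun l => (mem_periods l).1⟩
  have := δ.vertex_add_len_mul 0 m
  rw [← mul_left_inj (γ.vertex 0), ← γ.vertex_add_len, hm]
  exact_mod_cast this.symm

end Axis

theorem exists_periodic_letter {L : List (α × Bool)} (hL : FreeGroup.IsCyclicallyReduced L)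
    (hL₀ : L ≠ []) : ∃ c : ℤ → α × Bool, Function.Periodic c L.length ∧
      (List.ofFn fun i : Fin L.length => c (i : ℕ)) = L ∧ ∀ t, c (t + 1) ≠ invLetter (c t) := by
  have hn : 0 < L.length := List.length_pos_iff.2 hL₀
  have exists_mod (t : ℤ) : ∃ r : ℕ, r < L.length ∧ t % L.length = r :=
    ⟨(t % L.length).toNat, by have := Int.emod_lt_of_pos t (Int.natCast_pos.2 hn); lia,
      (Int.toNat_of_nonneg (Int.emod_nonneg t (by lia))).symm⟩
  choose r hr hr' using exists_mod
  have mod_eq {t : ℤ} {k : ℕ} (ht : t % L.length = k) : r t = k := by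
    exact_mod_cast (hr' t).symm.trans ht
  refine ⟨fun t => L[r t]'(hr t), fun t => ?_, List.ext_getElem (by simp) fun i hi _ => ?_,
    fun t h => ?_⟩
  · simp only [mod_eq ((Int.add_emod_right t _).trans (hr' t))]
  · have : r i = i := mod_eq (Int.emod_eq_of_lt (by lia) (by simpa using hi))
    simp [this]
  · have mod_add_one : (t + 1) % L.length = (r t + 1 : ℕ) % L.length := by
      rw [Nat.cast_succ, ← hr', Int.emod_add_emod]
    rcases (Nat.succ_le_of_lt (hr t)).lt_or_eq with h₁ | h₁
    · have : r (t + 1) = r t + 1 := mod_eq (by rw [mod_add_one, Int.emod_eq_of_lt] <;> lia)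
      have := List.isChain_iff_getElem.1 hL.1 (r t) h₁
      simp_all [invLetter]
    · have : r (t + 1) = 0 := mod_eq (by rw [mod_add_one, ← h₁]; simp)
      have := hL.2 (L[r t]'(hr t)) (by simp [List.getLast?_eq_getElem?, ← h₁]) L[0]
        (by simp [List.head?_eq_getElem?])
      simp_all [invLetter]

theorem exists_apply_add_one_eq_mul {G : Type*} [Group G] (f : ℤ → G) :
    ∃ F : ℤ → G, F 0 = 1 ∧ ∀ t, F (t + 1) = F t * f t := by
  -- The orbit of `(0, 1)` under `σ` is the graph of the desired `F`.
  let σ : Equiv.Perm (ℤ × G) :=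
    { toFun := fun x => (x.1 + 1, x.2 * f x.1)
      invFun := fun x => (x.1 - 1, x.2 * (f (x.1 - 1))⁻¹)
      left_inv := fun x => by simp
      right_inv := fun x => by simp }
  have time (t : ℤ) : ((σ ^ t) (0, 1)).1 = t := by
    induction t with
    | zero => rfl
    | succ t ih =>
      rw [add_comm, zpow_one_add, Equiv.Perm.mul_apply]
      exact (congrArg (· + 1) ih).trans (add_comm _ _)
    | pred t ih =>
      rw [sub_eq_neg_add, zpow_add, zpow_neg_one, Equiv.Perm.mul_apply]
      exact (congrArg (· - 1) ih).trans (sub_eq_neg_add _ _)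
  refine ⟨fun t => ((σ ^ t) (0, 1)).2, rfl, fun t => ?_⟩
  simp only [add_comm t, zpow_one_add, Equiv.Perm.mul_apply]
  rw [← congrArg f (time t)]
  rfl

theorem nonempty_axis_mk {L : List (α × Bool)} (hL : FreeGroup.IsCyclicallyReduced L)
    (hL₀ : L ≠ []) : Nonempty (Axis (FreeGroup.mk L)) := by
  obtain ⟨c, hc, hcL, hc'⟩ := exists_periodic_letter hL hL₀
  obtain ⟨F, hF₀, hF⟩ := exists_apply_add_one_eq_mul fun t => FreeGroup.mk [c t]
  have period (n : ℕ) : F n = FreeGroup.mk (List.ofFn fun i : Fin n => c (i : ℕ)) := by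
    induction n with
    | zero => rw [Nat.cast_zero, hF₀, List.ofFn_zero, FreeGroup.one_eq_mk]
    | succ n ih =>
      rw [Nat.cast_succ, hF, ih, List.ofFn_succ', List.concat_eq_append, FreeGroup.mul_mk]
      simp only [Fin.val_castSucc, Fin.val_last]
  refine ⟨⟨F, c, L.length, List.length_pos_iff.2 hL₀, hF, hc', fun t => ?_⟩⟩
  rw [← congrArg FreeGroup.mk hcL, ← period]
  induction t with
  | zero => rw [zero_add, hF₀, mul_one]
  | succ t ih => rw [add_right_comm, hF, hF, ih, hc, mul_assoc]
  | pred t ih =>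
    rw [← mul_left_inj (FreeGroup.mk [c (-t - 1)]), mul_assoc, ← hF, sub_add_cancel, ← ih,
      ← hc (-t - 1), ← hF]
    ring_nf

theorem nonempty_axis {u : FreeGroup α} (hu : u ≠ 1) : Nonempty (Axis u) := by
  classical
  let L := FreeGroup.reduceCyclically u.toWord
  let a := FreeGroup.mk (FreeGroup.reduceCyclically.conjugator u.toWord)
  have conj_mk : a * FreeGroup.mk L * a⁻¹ = u := by
    rw [FreeGroup.inv_mk, FreeGroup.mul_mk, FreeGroup.mul_mk,
      FreeGroup.reduceCyclically.conj_conjugator_reduceCyclically, FreeGroup.mk_toWord]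
  have hL₀ : L ≠ [] := fun h => hu <| by rw [← conj_mk, h, ← FreeGroup.one_eq_mk]; simp
  obtain ⟨γ⟩ := nonempty_axis_mk
    (FreeGroup.reduceCyclically.isCyclicallyReduced FreeGroup.isReduced_toWord) hL₀
  exact ⟨conj_mk ▸ γ.conj a⟩

end Axis

section Walk

namespace Axis

variable {α Q : Type*} [Group Q] {u v : FreeGroup α} (φ : FreeGroup α →* Q)

/-- The image of an axis in the Cayley graph of `Q`, translated by `x`. Vertices are inverted so
that letters act by left multiplication, as they do in the regular wreath product. -/
def walk (γ : Axis u) (x : Q) (t : ℤ) : Q := (φ (γ.vertex t))⁻¹ * x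

/-- The edge of the Cayley graph of `Q` crossed by the walk at time `t`. The pair `(i, q)` stands
for the unoriented edge with endpoints `q` and `φ (of i)⁻¹ * q`. -/
def edge (γ : Axis u) (x : Q) (t : ℤ) : α × Q :=
  ((γ.letter t).1, if (γ.letter t).2 then γ.walk φ x t else γ.walk φ x (t + 1))

/-- The quotient map `φ` identifies two vertices of the axis only if the axis looks the same from
both of them. -/
def SeparatedBy (γ : Axis u) : Prop :=
  ∀ s t, φ (γ.vertex s) = φ (γ.vertex t) → Function.Periodic γ.letter (t - s)

variable {φ} {γ : Axis u} {δ : Axis v} {x y : Q} {s t τ : ℤ}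

theorem mk_singleton_true (i : α) : FreeGroup.mk [(i, true)] = FreeGroup.of i := rfl

theorem mk_singleton_false (i : α) : FreeGroup.mk [(i, false)] = (FreeGroup.of i)⁻¹ := rfl

theorem walk_add_one : γ.walk φ x (t + 1) = (φ (FreeGroup.mk [γ.letter t]))⁻¹ * γ.walk φ x t := by
  rw [walk, walk, vertex_add_one, map_mul, mul_inv_rev, mul_assoc]

theorem edge_rev : δ.rev.edge φ y (-t - 1) = δ.edge φ y t := by
  have h₁ : -(-t - 1) = t + 1 := by ring
  cases h : (δ.letter t).2 <;> simp [edge, walk, rev, invLetter, h₁, h]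

theorem edge_eq_edge (h : γ.edge φ x s = δ.edge φ y t) :
    (γ.letter s = δ.letter t ∧ γ.walk φ x s = δ.walk φ y t) ∨
      (γ.letter s = invLetter (δ.letter t) ∧ γ.walk φ x s = δ.walk φ y (t + 1) ∧
        γ.walk φ x (s + 1) = δ.walk φ y t) := by
  obtain ⟨h₁, h₂⟩ := Prod.ext_iff.1 h
  dsimp only [edge] at h₁ h₂
  have hγ := γ.walk_add_one (φ := φ) (x := x) (t := s)
  have hδ := δ.walk_add_one (φ := φ) (x := y) (t := t)
  generalize γ.letter s = a at *
  generalize δ.letter t = b at *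
  obtain ⟨i, _ | _⟩ := a <;> obtain ⟨j, _ | _⟩ := b <;> obtain rfl : i = j := h₁
  case false.true =>
    replace h₂ : γ.walk φ x (s + 1) = δ.walk φ y t := h₂
    refine .inr ⟨rfl, ?_, h₂⟩
    rw [hδ, ← h₂, hγ, mk_singleton_true, mk_singleton_false, map_inv, inv_inv, inv_mul_cancel_left]
  all_goals simp_all [mk_singleton_true, mk_singleton_false, invLetter]

namespace SeparatedBy

theorem of_injOn (h : (Set.range fun t => (γ.vertex t)⁻¹ * u * γ.vertex t).InjOn φ) :
    γ.SeparatedBy φ := fun s t hst =>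
  γ.letter_periodic_of_conj_eq (h ⟨s, rfl⟩ ⟨t, rfl⟩ (by simp only [map_mul, map_inv, hst]))

theorem periodic_of_walk_eq (hγ : γ.SeparatedBy φ) (h : γ.walk φ x s = γ.walk φ x t) :
    Function.Periodic γ.letter (t - s) :=
  hγ s t (inv_injective (mul_right_cancel h))

theorem letter_eq_of_walk_eq (hγ : γ.SeparatedBy φ) (h : γ.walk φ x s = γ.walk φ x t) (i : ℤ) :
    γ.letter (s + i) = γ.letter (t + i) := by
  rw [← hγ.periodic_of_walk_eq h]
  congr 1
  ring

theorem rev (hδ : δ.SeparatedBy φ) : δ.rev.SeparatedBy φ := fun s t h i => by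
  change invLetter (δ.letter (-(i + (t - s)) - 1)) = invLetter (δ.letter (-i - 1))
  rw [← hδ (-t) (-s) h.symm]
  congr 2
  ring

theorem letter_eq_and_walk_eq_of_edge_cover (hδ : δ.SeparatedBy φ)
    (cover : ∀ t, ∃ τ, γ.edge φ x t = δ.edge φ y τ)
    (h₀ : γ.letter 0 = δ.letter τ ∧ γ.walk φ x 0 = δ.walk φ y τ) (t : ℕ) :
    γ.letter t = δ.letter (τ + t) ∧ γ.walk φ x t = δ.walk φ y (τ + t) := by
  induction t with
  | zero => simpa using h₀
  | succ t ih =>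
    rw [Nat.cast_succ, ← add_assoc]
    have walk_eq : γ.walk φ x (t + 1) = δ.walk φ y (τ + t + 1) := by
      rw [walk_add_one, walk_add_one, ih.1, ih.2]
    refine ⟨?_, walk_eq⟩
    obtain ⟨σ, hσ⟩ := cover (t + 1)
    rcases edge_eq_edge hσ with ⟨h, hw⟩ | ⟨h, hw, -⟩
    · simpa [h] using hδ.letter_eq_of_walk_eq (hw.symm.trans walk_eq) 0
    · have : δ.letter σ = γ.letter t := by
        simpa [ih.1] using hδ.letter_eq_of_walk_eq (hw.symm.trans walk_eq) (-1)
      exact absurd (this ▸ h) (γ.letter_add_one_ne t)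

theorem dvd_sub_of_edge_eq (hγ : γ.SeparatedBy φ)
    (primitive : ∀ k, Function.Periodic γ.letter k → (γ.len : ℤ) ∣ k)
    (h : γ.edge φ x s = γ.edge φ x t) : (γ.len * orderOf (φ u) : ℤ) ∣ t - s := by
  rcases edge_eq_edge h with ⟨-, hw⟩ | ⟨hl, hw, -⟩
  · obtain ⟨k, hk⟩ := primitive _ (hγ.periodic_of_walk_eq hw)
    obtain rfl : t = s + γ.len * k := by rw [← hk, add_sub_cancel]
    have : φ u ^ k = 1 := by
      simpa [walk, γ.vertex_add_len_mul] using hw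
    rw [add_sub_cancel_left]
    exact mul_dvd_mul_left _ (orderOf_dvd_iff_zpow_eq_one.2 this)
  · have : γ.letter s = γ.letter (t + 1) := by simpa using hγ.letter_eq_of_walk_eq hw 0
    exact absurd (this ▸ hl) (γ.letter_add_one_ne t)

end SeparatedBy

theorem edge_periodic {k : ℕ} (hk : φ u ^ k = 1) :
    Function.Periodic (γ.edge φ x) (γ.len * k) := by
  intro t
  have letter_eq (t : ℤ) : γ.letter (t + γ.len * k) = γ.letter t := by
    rw [mul_comm]; exact γ.letter_periodic.int_mul _ t
  have walk_eq (t : ℤ) : γ.walk φ x (t + γ.len * k) = γ.walk φ x t := by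
    rw [walk, γ.vertex_add_len_mul, zpow_natCast, map_mul, map_pow, hk, one_mul, walk]
  rw [edge, edge, letter_eq, walk_eq, add_right_comm, walk_eq]

theorem exists_commute_of_letter_eq (h : ∀ t : ℕ, γ.letter t = δ.letter (τ + t)) :
    ∃ g, Commute (g * v * g⁻¹) u := by
  let g := γ.vertex 0 * (δ.vertex τ)⁻¹
  have vertex_eq (t : ℕ) : γ.vertex t = g * δ.vertex (τ + t) := by
    induction t with
    | zero => simp [g]
    | succ t ih =>
      rw [Nat.cast_succ, γ.vertex_add_one, ih, h, ← add_assoc, δ.vertex_add_one, mul_assoc]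
  refine ⟨g, ?_⟩
  have translate_v (t : ℕ) : γ.vertex (t + δ.len) = g * v * g⁻¹ * γ.vertex t := by
    rw [← Nat.cast_add, vertex_eq, vertex_eq, Nat.cast_add, ← add_assoc, δ.vertex_add_len]
    group
  refine mul_right_cancel (b := γ.vertex 0) ?_
  calc g * v * g⁻¹ * u * γ.vertex 0
      = γ.vertex (γ.len + δ.len) := by
        rw [mul_assoc, ← γ.vertex_add_len, zero_add, translate_v]
    _ = u * (g * v * g⁻¹) * γ.vertex 0 := by
        rw [add_comm, γ.vertex_add_len, ← zero_add (δ.len : ℤ), mul_assoc]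
        exact congrArg (u * ·) (translate_v 0)

theorem exists_commute_of_edge_cover (hδ : δ.SeparatedBy φ)
    (cover : ∀ t, ∃ τ, γ.edge φ x t = δ.edge φ y τ) : ∃ g, Commute (g * v * g⁻¹) u := by
  obtain ⟨τ, hτ⟩ := cover 0
  rcases edge_eq_edge hτ with h | ⟨h, hw, -⟩
  · exact exists_commute_of_letter_eq fun t => (hδ.letter_eq_and_walk_eq_of_edge_cover cover h t).1
  · have cover' (t) : ∃ τ, γ.edge φ x t = δ.rev.edge φ y τ :=
      (cover t).imp' _ fun σ hσ => hσ.trans edge_rev.symm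
    have h₀ : γ.letter 0 = δ.rev.letter (-(τ + 1)) ∧ γ.walk φ x 0 = δ.rev.walk φ y (-(τ + 1)) := by
      simpa [Axis.rev, walk] using ⟨h, hw⟩
    obtain ⟨g, hg⟩ := exists_commute_of_letter_eq fun t =>
      (hδ.rev.letter_eq_and_walk_eq_of_edge_cover cover' h₀ t).1
    refine ⟨g, ?_⟩
    rw [← Commute.inv_left_iff]
    simpa [mul_assoc] using hg

end Axis

end Walk

section Commute

theorem isCyclic_of_isFreeGroup_of_isMulCommutative (G : Type*) [Group G] [IsFreeGroup G]
    [IsMulCommutative G] : IsCyclic G := by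
  have : Subsingleton (IsFreeGroup.Generators G) := ⟨fun i j => by
    have comm : FreeGroup.of i * FreeGroup.of j = FreeGroup.of j * FreeGroup.of i :=
      (IsFreeGroup.mulEquiv G).injective (by rw [map_mul, map_mul, mul_comm'])
    have reduced (a b : IsFreeGroup.Generators G) : FreeGroup.IsReduced [(a, true), (b, true)] := by
      simp [FreeGroup.IsReduced]
    exact congrArg Prod.fst
      (List.cons.inj (mk_inj_of_isReduced (reduced i j) (reduced j i) comm)).1⟩
  have : IsCyclic (FreeGroup (IsFreeGroup.Generators G)) := by
    cases isEmpty_or_nonempty (IsFreeGroup.Generators G)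
    · infer_instance
    · have := uniqueOfSubsingleton (Classical.arbitrary (IsFreeGroup.Generators G))
      infer_instance
  exact isCyclic_of_surjective _ (IsFreeGroup.mulEquiv G).surjective

theorem exists_mem_zpowers_of_commute {G : Type*} [Group G] [IsFreeGroup G] {x y : G}
    (h : Commute x y) : ∃ z, x ∈ zpowers z ∧ y ∈ zpowers z := by
  have : IsMulCommutative (closure {x, y}) := isMulCommutative_closure (by
    rintro a (rfl | rfl) b (rfl | rfl)
    exacts [rfl, h, h.symm, rfl])
  obtain ⟨z, hz⟩ :=
    (isCyclic_of_isFreeGroup_of_isMulCommutative (closure {x, y})).exists_zpow_surjective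
  have mem {a : G} (ha : a ∈ closure {x, y}) : a ∈ zpowers (z : G) := by
    obtain ⟨k, hk⟩ := hz ⟨a, ha⟩
    exact ⟨k, congrArg Subtype.val hk⟩
  exact ⟨z, mem (subset_closure (by simp)), mem (subset_closure (by simp))⟩

theorem inConjCyclic_of_commute {G : Type} [Group G] [IsFreeGroup G] {g x y : G}
    (h : Commute (g * x * g⁻¹) y) : InConjCyclic x y := by
  obtain ⟨z, hx, hy⟩ := exists_mem_zpowers_of_commute h
  refine ⟨g, z, ?_, zpowers_le.2 hy⟩
  rw [MonoidHom.map_zpowers, zpowers_le]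
  simpa using hx

end Commute

section Wreath

open RegularWreathProduct

theorem wreath_pow_eq_one_iff {D Q : Type*} [Group D] [Group Q] {X : D ≀ᵣ Q}
    (hX : X.right = 1) (k : ℕ) : X ^ k = 1 ↔ ∀ x, X.left x ^ k = 1 := by
  have left_pow (k : ℕ) : (X ^ k).left = X.left ^ k := by
    induction k with
    | zero => simp
    | succ k ih => rw [pow_succ', mul_left, hX, pow_succ', ← ih]; simp
  have right_pow : (X ^ k).right = 1 := by
    rw [← rightHom_eq_right, map_pow, rightHom_eq_right, hX, one_pow]
  simp [RegularWreathProduct.ext_iff, left_pow, right_pow, funext_iff]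

theorem wreath_pow_mul_eq_one_iff {D Q : Type*} [Group D] [Group Q] {p : ℕ}
    (hQ : ∀ q : Q, q ^ p = 1) (X : D ≀ᵣ Q) (k : ℕ) :
    X ^ (p * k) = 1 ↔ ∀ x, (X ^ p).left x ^ k = 1 := by
  rw [pow_mul]
  refine wreath_pow_eq_one_iff ?_ k
  rw [← rightHom_eq_right, map_pow, hQ]

variable {α D Q : Type*} [Group D] [Group Q]

/-- The homomorphism over `φ` to the regular wreath product that labels the edge `(i, x)` of the
Cayley graph of `Q` by `f (i, x)`. -/
def wreathHom (φ : FreeGroup α →* Q) (f : α × Q → D) : FreeGroup α →* D ≀ᵣ Q :=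
  FreeGroup.lift fun i => ⟨fun x => f (i, x), φ (.of i)⟩

variable {φ : FreeGroup α →* Q} {f : α × Q → D}

theorem wreathHom_right (g : FreeGroup α) : (wreathHom φ f g).right = φ g := by
  have : rightHom.comp (wreathHom φ f) = φ := by ext i; simp [wreathHom]
  exact DFunLike.congr_fun this g

namespace Axis

variable {u : FreeGroup α} {γ : Axis u} {x : Q}

theorem wreathHom_letter_left (t : ℤ) :
    (wreathHom φ f (FreeGroup.mk [γ.letter t])).left (γ.walk φ x t) =
      if (γ.letter t).2 then f (γ.edge φ x t) else (f (γ.edge φ x t))⁻¹ := by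
  rw [edge, walk_add_one]
  obtain ⟨i, _ | _⟩ := γ.letter t <;>
    simp [wreathHom, mk_singleton_true, mk_singleton_false, -FreeGroup.inv_mk]

variable {A : Type*} [CommGroup A] (σ : D →* A)

theorem map_wreathHom_vertex_left (n : ℕ) :
    σ ((wreathHom φ f (γ.vertex n)).left x) = σ ((wreathHom φ f (γ.vertex 0)).left x) *
      ∏ t ∈ Finset.range n, if (γ.letter t).2 then σ (f (γ.edge φ x t))
        else (σ (f (γ.edge φ x t)))⁻¹ := by
  induction n with
  | zero => simp
  | succ n ih =>
    have := γ.wreathHom_letter_left (φ := φ) (f := f) (x := x) n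
    rw [Finset.prod_range_succ, ← mul_assoc, ← ih, Nat.cast_succ, vertex_add_one, map_mul, mul_left,
      Pi.mul_apply, wreathHom_right, map_mul, ← walk, this]
    split_ifs <;> simp

variable {k : ℕ}

theorem map_wreathHom_pow_left (hk : φ u ^ k = 1) :
    σ ((wreathHom φ f u ^ k).left x) =
      ∏ t ∈ Finset.range (γ.len * k), if (γ.letter t).2 then σ (f (γ.edge φ x t))
        else (σ (f (γ.edge φ x t)))⁻¹ := by
  have loop := γ.map_wreathHom_vertex_left (φ := φ) (f := f) (x := x) σ (γ.len * k)
  have : γ.vertex (γ.len * k : ℕ) = u ^ k * γ.vertex 0 := by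
    simpa using γ.vertex_add_len_mul 0 k
  rw [this, map_mul, mul_left, Pi.mul_apply, wreathHom_right, map_pow φ, hk, map_mul, inv_one,
    one_mul, mul_comm] at loop
  rw [← map_pow]
  exact mul_left_cancel loop

theorem map_wreathHom_pow_left_eq_one (hk : φ u ^ k = 1) (hf : ∀ t, σ (f (γ.edge φ x t)) = 1) :
    σ ((wreathHom φ f u ^ k).left x) = 1 := by
  simp [γ.map_wreathHom_pow_left σ hk, hf]

theorem map_wreathHom_pow_left_ne_one (hk : φ u ^ k = 1) (hk₀ : 0 < k)
    (inj : ∀ s t, γ.edge φ x s = γ.edge φ x t → (γ.len * k : ℤ) ∣ t - s)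
    {t₀ : ℤ} (hf : ∀ ε, σ (f ε) = 1 ↔ ε ≠ γ.edge φ x t₀) :
    σ ((wreathHom φ f u ^ k).left x) ≠ 1 := by
  obtain ⟨n, hn, hnt⟩ := (γ.edge_periodic (x := x) hk).exists_mem_Ico₀
    (by have := γ.len_pos; positivity) t₀
  lift n to ℕ using hn.1
  have hn' : n < γ.len * k := by exact_mod_cast hn.2
  rw [γ.map_wreathHom_pow_left σ hk, Finset.prod_eq_single n]
  · split_ifs <;> simp [hf, ← hnt]
  · intro t ht htn
    have : γ.edge φ x t ≠ γ.edge φ x t₀ := fun h => htn (by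
      refine (Nat.modEq_iff_dvd.2 ?_).eq_of_lt_of_lt (Finset.mem_range.1 ht) hn'
      exact_mod_cast inj _ _ (h.trans hnt))
    simp [(hf _).2 this]
  · exact fun h => absurd (Finset.mem_range.2 hn') h

end Axis

end Wreath

section OrderSeparated

/-- Some finite quotient of exponent dividing `p ^ (e + 1)` gives the image of `u`, but not that of
`v`, the order `p ^ (e + 1)`. -/
def OrderSeparated {G : Type*} [Group G] (p e : ℕ) (u v : G) : Prop :=
  ∃ (P : Type) (_ : Group P) (_ : Finite P) (Φ : G →* P),
    (∀ x : P, x ^ p ^ (e + 1) = 1) ∧ Φ u ^ p ^ e ≠ 1 ∧ Φ v ^ p ^ e = 1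

variable {p : ℕ}

theorem OrderSeparated.pow_left {G : Type*} [Group G] {e m : ℕ} {u v : G}
    (h : OrderSeparated p e u v) (hm : p.Coprime m) : OrderSeparated p e (u ^ m) v := by
  obtain ⟨P, _, _, Φ, exponent, hu, hv⟩ := h
  refine ⟨P, _, ‹_›, Φ, exponent, fun h => hu ?_, hv⟩
  have h₁ : (Φ u ^ p ^ e) ^ p = 1 := by rw [← pow_mul, ← pow_succ, exponent]
  have h₂ : (Φ u ^ p ^ e) ^ m = 1 := by rw [← pow_mul, mul_comm, pow_mul, ← map_pow, h]
  simpa [hm.gcd_eq_one] using pow_gcd_eq_one.2 ⟨h₁, h₂⟩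

variable {α : Type}

theorem orderSeparated_of_edge_ne {Q : Type} [Group Q] [Finite Q] {φ : FreeGroup α →* Q}
    {u v : FreeGroup α} {γ : Axis u} {δ : Axis v} {e : ℕ} (hp : p.Prime) (hQ : ∀ q : Q, q ^ p = 1)
    (he : Nat.card Q ≤ p ^ e)
    (inj : ∀ s t, γ.edge φ 1 s = γ.edge φ 1 t → (γ.len * p : ℤ) ∣ t - s)
    (missed : ∀ y, ∃ t, ∀ τ, δ.edge φ y τ ≠ γ.edge φ 1 t) : OrderSeparated p (e + 1) u v := by
  classical
  have := Fact.mk hp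
  have := Fintype.ofFinite Q
  choose t ht using missed
  obtain ⟨emb⟩ : Nonempty (Q ↪ Fin (p ^ e)) :=
    Function.Embedding.nonempty_of_card_le (by simpa [Nat.card_eq_fintype_card] using he)
  let c := Function.invFun emb
  choose f hf using fun ε => unitriangular.exists_superdiag_eq (R := ZMod p) fun l : Fin (p ^ e) =>
    if ε = γ.edge φ 1 (t (c l)) then 1 else 0
  have superdiag_eq_one (l ε) : unitriangular.superdiag l (f ε) = 1 ↔ ε ≠ γ.edge φ 1 (t (c l)) := by
    rw [hf, ofAdd_eq_one]
    simp
  refine ⟨unitriangular (p ^ e + 1) (ZMod p) ≀ᵣ Q, _, inferInstance, wreathHom φ f, ?_, ?_, ?_⟩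
  · intro X
    rw [pow_succ', wreath_pow_mul_eq_one_iff hQ]
    exact fun x => unitriangular.pow_prime_pow_eq_one _
      (Nat.pow_lt_pow_right hp.one_lt e.lt_succ_self)
  · rw [pow_succ', Ne, wreath_pow_mul_eq_one_iff hQ]
    intro h
    obtain ⟨l, hl⟩ := (unitriangular.pow_prime_pow_eq_one_iff_exists_superdiag _).1 (h 1)
    exact γ.map_wreathHom_pow_left_ne_one _ (hQ _) hp.pos inj (superdiag_eq_one l) hl
  · rw [pow_succ', wreath_pow_mul_eq_one_iff hQ]
    intro x
    obtain ⟨l, rfl⟩ := Function.invFun_surjective emb.injective x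
    refine (unitriangular.pow_prime_pow_eq_one_iff_exists_superdiag _).2 ⟨l, ?_⟩
    exact δ.map_wreathHom_pow_left_eq_one _ (hQ _) fun τ => (superdiag_eq_one l _).2 (ht _ τ)

theorem Axis.finite_conjugates {u : FreeGroup α} (γ : Axis u) :
    (Set.range fun t => (γ.vertex t)⁻¹ * u * γ.vertex t).Finite := by
  have periodic : Function.Periodic (fun t => (γ.vertex t)⁻¹ * u * γ.vertex t) γ.len := fun t => by
    simp only [γ.vertex_add_len]
    group
  rw [← periodic.image_Ioc (by exact_mod_cast γ.len_pos) 0]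
  exact (Set.finite_Ioc _ _).image _

theorem inConjCyclic_one_right {G : Type} [Group G] (x : G) : InConjCyclic x 1 :=
  ⟨1, x, by simp, by simp⟩

theorem eventually_orderSeparated {u v : FreeGroup α} (hv : v ≠ 1) (hcc : ¬ InConjCyclic v u) :
    ∀ᶠ p in atTop, p.Prime → ∀ᶠ e in atTop, OrderSeparated p e u v := by
  have hu : u ≠ 1 := by
    rintro rfl
    exact hcc (inConjCyclic_one_right v)
  obtain ⟨⟨δ⟩, ⟨γ'⟩⟩ := And.intro (nonempty_axis hv) (nonempty_axis hu)
  obtain ⟨z, m, γ, hm, rfl, primitive⟩ := γ'.exists_primitive_root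
  have hz : z ≠ 1 := by
    rintro rfl
    exact hu (one_pow m)
  have finite := (γ.finite_conjugates.union δ.finite_conjugates).union (Set.toFinite {1, z})
  filter_upwards [eventually_exists_finite_quotient_injOn finite, eventually_gt_atTop m]
    with p quotient hmp hp
  obtain ⟨Q, _, _, φ, hQ, injOn⟩ := quotient hp
  have hγ : γ.SeparatedBy φ := .of_injOn (injOn.mono (by grind))
  have hδ : δ.SeparatedBy φ := .of_injOn (injOn.mono (by grind))
  have order_z : orderOf (φ z) = p := by
    have := Fact.mk hp
    refine orderOf_eq_prime (hQ _) fun h => hz (injOn (by simp) (by simp) (h.trans φ.map_one.symm))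
  have missed (y) : ∃ t, ∀ τ, δ.edge φ y τ ≠ γ.edge φ 1 t := by
    by_contra! cover
    obtain ⟨g, hg⟩ := Axis.exists_commute_of_edge_cover hδ fun t =>
      (cover t).imp fun _ => Eq.symm
    exact hcc (inConjCyclic_of_commute (hg.pow_right m))
  have separated (e) (he : Nat.card Q ≤ e) : OrderSeparated p (e + 1) z v :=
    orderSeparated_of_edge_ne hp hQ (he.trans (Nat.lt_pow_self hp.one_lt).le)
      (fun s t h => order_z ▸ hγ.dvd_sub_of_edge_eq primitive h) missed
  filter_upwards [eventually_gt_atTop (Nat.card Q)] with e he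
  obtain ⟨e, rfl⟩ := Nat.exists_eq_succ_of_ne_zero (Nat.ne_zero_of_lt he)
  exact (separated e (Nat.lt_succ_iff.1 he)).pow_left (Nat.coprime_of_lt_prime hm.ne' hmp hp)

end OrderSeparated

section Combination

theorem exists_surjective_of_orderSeparated {G : Type*} {ι : Type} [Group G] [Finite ι] {p e : ℕ}
    (hp : p.Prime) (he : e ≠ 0) {u : ι → G} {v : G} (separated : ∀ i, OrderSeparated p e (u i) v)
    (quotient : ∃ (Q : Type) (_ : Group Q) (_ : Finite Q) (ψ : G →* Q),
      (∀ q : Q, q ^ p = 1) ∧ ψ v ≠ 1) :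
    ∃ (P : Type) (_ : Group P) (_ : Finite P) (φ : G →* P), Function.Surjective φ ∧
      IsPGroup p P ∧ (∀ i, orderOf (φ (u i)) = p ^ (e + 1)) ∧ orderOf (φ v) ≤ p ^ e ∧ φ v ≠ 1 := by
  have := Fact.mk hp
  obtain ⟨Q, _, _, ψ, hQ, hψ⟩ := quotient
  choose P _ _ Φ exponent hu hv using separated
  have hQ' {n : ℕ} (hn : n ≠ 0) (q : Q) : q ^ p ^ n = 1 := by
    rw [← Nat.sub_add_cancel (Nat.pos_of_ne_zero hn), pow_succ', pow_mul, hQ, one_pow]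
  let Ψ : G →* (∀ i, P i) × Q := (MonoidHom.pi Φ).prod ψ
  have exponent' (x : (∀ i, P i) × Q) : x ^ p ^ (e + 1) = 1 :=
    Prod.ext (funext fun i => exponent i _) (hQ' e.succ_ne_zero _)
  refine ⟨Ψ.range, _, inferInstance, Ψ.rangeRestrict, Ψ.rangeRestrict_surjective,
    .to_subgroup (fun x => ⟨e + 1, exponent' x⟩) _, fun i => ?_, ?_, fun h => ?_⟩
  · rw [← Subgroup.orderOf_coe]
    exact orderOf_eq_prime_pow (fun h => hu i (congrFun (congrArg Prod.fst h) i)) (exponent' _)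
  · refine orderOf_le_of_pow_eq_one (pow_pos hp.pos e) (Subtype.ext ?_)
    exact Prod.ext (funext hv) (hQ' he _)
  · exact hψ (congrArg Prod.snd (congrArg Subtype.val h))

theorem stmt1_general {α ι : Type} [Finite ι] (u : ι → FreeGroup α) (v : FreeGroup α) (hv : v ≠ 1)
    (hcc : ∀ i, ¬ InConjCyclic v (u i)) :
    ∃ p₀ : ℕ, ∀ p : ℕ, p.Prime → p₀ ≤ p → ∀ N : ℕ,
      ∃ (P : Type) (_ : Group P) (_ : Finite P) (φ : FreeGroup α →* P),
        Function.Surjective φ ∧ IsPGroup p P ∧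
        (∀ i j, orderOf (φ (u i)) = orderOf (φ (u j))) ∧
        (∀ i, orderOf (φ v) < orderOf (φ (u i))) ∧
        1 < orderOf (φ v) ∧
        (∀ i, N < orderOf (φ (u i))) := by
  obtain ⟨p₀, hp₀⟩ := eventually_atTop.1 ((eventually_exists_finite_quotient hv).and
    (eventually_all.2 fun i => eventually_orderSeparated hv (hcc i)))
  refine ⟨p₀, fun p hp hpp₀ N => ?_⟩
  obtain ⟨quotient, separated⟩ := hp₀ p hpp₀
  obtain ⟨e, hsep, he⟩ := ((eventually_all.2 fun i => separated i hp).and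
    (eventually_gt_atTop N)).exists
  obtain ⟨P, _, _, φ, surj, pGroup, hu, hv, hv₁⟩ :=
    exists_surjective_of_orderSeparated hp (Nat.ne_zero_of_lt he) hsep (quotient hp)
  have hlt : p ^ e < p ^ (e + 1) := Nat.pow_lt_pow_right hp.one_lt e.lt_succ_self
  refine ⟨P, _, ‹_›, φ, surj, pGroup, fun i j => (hu i).trans (hu j).symm,
    fun i => hu i ▸ hv.trans_lt hlt, ?_, fun i => hu i ▸ ?_⟩
  · exact Nat.one_lt_iff_ne_zero_and_ne_one.2 ⟨(orderOf_pos _).ne', orderOf_eq_one_iff.not.2 hv₁⟩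
  · exact (he.trans (Nat.lt_pow_self hp.one_lt)).trans hlt

end Combination

theorem stmt1 (r k : ℕ) (u : Fin k → FreeGroup (Fin r)) (v : FreeGroup (Fin r))
    (hu : ∀ i, u i ≠ 1) (hv : v ≠ 1)
    (hcc : ∀ i, ¬ InConjCyclic v (u i)) :
    ∃ p₀ : ℕ, ∀ p : ℕ, p.Prime → p₀ ≤ p → ∀ N : ℕ,
      ∃ (P : Type) (_ : Group P) (_ : Finite P) (φ : FreeGroup (Fin r) →* P),
        Function.Surjective φ ∧ IsPGroup p P ∧
        (∀ i j : Fin k, orderOf (φ (u i)) = orderOf (φ (u j))) ∧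
        (∀ i : Fin k, orderOf (φ v) < orderOf (φ (u i))) ∧
        1 < orderOf (φ v) ∧
        (∀ i : Fin k, N < orderOf (φ (u i))) :=
  stmt1_general u v hv hcc
end

section
/- Every free group F is potent: for each element g ∈ F and each natural number n ≥ 1, there exists a finite-index normal subgroup H of F such that ⟨g⟩ ∩ H = ⟨gⁿ⟩. -/
open Subgroup

/-!
Read modulo `n * |c|`, a transvection `1 + c E i j` with `c ≠ 0` has order exactly `n`, so it is
enough to send `g` to such a transvection by an integral matrix representation.

If some unitriangular representation does not kill `g`, choose an interval `[i, j]` of indices,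
minimal for inclusion, such that the `(i, j)` entry of the image of `g` is nonzero and `i < j`.
Cutting the matrices down to the rows and columns in `[i, j]` is multiplicative, and by minimality
it turns the image of `g` into a transvection.

For a nontrivial `g = a₁ ^ e₁ ⋯ aᵣ ^ eᵣ` with `aₖ ≠ aₖ₊₁` and `eₖ ≠ 0`, let `N a` be the sum of the
`E k (k + 1)` over all `k` with `aₖ = a`. Then `N a * N a = 0`, so `a ↦ 1 + N a` defines a
representation with `a ^ e ↦ 1 + e N a`, and the top right entry of the image of `g` is `e₁ ⋯ eᵣ`.
-/

open Matrix Monoid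

universe u

/-- A group is potent if every element `g` can be given any prescribed order `n ≥ 1` in a finite
quotient. The order is encoded as `⟨g⟩ ∩ H = ⟨gⁿ⟩`, which allows `g = 1`. -/
def IsPotent (G : Type*) [Group G] : Prop :=
  ∀ (g : G) (n : ℕ), 1 ≤ n →
    ∃ H : Subgroup G, H.Normal ∧ H.FiniteIndex ∧ zpowers g ⊓ H = zpowers (g ^ n)

theorem zpowers_inf_ker {G Q : Type*} [Group G] [Group Q] (φ : G →* Q) (g : G) :
    zpowers g ⊓ φ.ker = zpowers (g ^ orderOf (φ g)) := by
  refine le_antisymm ?_ (le_inf ?_ ?_)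
  · rintro _ ⟨⟨m, rfl⟩, hm⟩
    obtain ⟨k, rfl⟩ : (orderOf (φ g) : ℤ) ∣ m :=
      orderOf_dvd_iff_zpow_eq_one.2 (by simpa using hm)
    exact mem_zpowers_iff.2 ⟨k, by rw [← zpow_natCast, ← _root_.zpow_mul]⟩
  · exact zpowers_le.2 (npow_mem_zpowers g _)
  · exact zpowers_le.2 (by rw [MonoidHom.mem_ker, map_pow, pow_orderOf_eq_one])

section Transvection

variable {ι R : Type*} [DecidableEq ι] [CommRing R] {i j : ι}

theorem transvection_eq_one_iff (c : R) : transvection i j c = 1 ↔ c = 0 := by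
  rw [transvection, add_eq_left]
  refine ⟨fun h => ?_, fun h => by rw [h, single_zero]⟩
  simpa using congrFun₂ h i j

variable [Fintype ι]

theorem transvection_pow (hij : i ≠ j) (c : R) (m : ℕ) :
    transvection i j c ^ m = transvection i j (m • c) := by
  induction m with
  | zero => simp
  | succ m ih => rw [pow_succ, ih, transvection_mul_transvection_same _ _ hij, succ_nsmul]

theorem orderOf_transvection (hij : i ≠ j) (c : R) :
    orderOf (transvection i j c) = addOrderOf c :=
  Nat.dvd_right_iff_eq.1 fun m => by
    rw [orderOf_dvd_iff_pow_eq_one, transvection_pow hij, transvection_eq_one_iff,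
      addOrderOf_dvd_iff_nsmul_eq_zero]

theorem map_transvection {S : Type*} [CommRing S] (f : R →+* S) (c : R) :
    f.mapMatrix (transvection i j c) = transvection i j (f c) := by
  simp [transvection, Matrix.map_add]

end Transvection

theorem addOrderOf_intCast_zmod_mul_natAbs {c : ℤ} (hc : c ≠ 0) (n : ℕ) :
    addOrderOf (c : ZMod (n * c.natAbs)) = n :=
  Nat.dvd_right_iff_eq.1 fun m => by
    have hc' : c.natAbs ≠ 0 := Int.natAbs_ne_zero.2 hc
    rw [addOrderOf_dvd_iff_nsmul_eq_zero, nsmul_eq_mul, ← Int.cast_natCast, ← Int.cast_mul,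
      ZMod.intCast_zmod_eq_zero_iff_dvd, Int.natCast_dvd, Int.natAbs_mul, Int.natAbs_natCast,
      Nat.mul_dvd_mul_iff_right (Nat.pos_of_ne_zero hc')]

section Unitriangular

/-- The monoid of upper triangular matrices with unit diagonal. -/
def upperUnitriangular (ι R : Type*) [Fintype ι] [LinearOrder ι] [Semiring R] :
    Submonoid (Matrix ι ι R) where
  carrier := {M | M.IsUpperTriangular ∧ ∀ i, M i i = 1}
  one_mem' := ⟨blockTriangular_one, fun _ => one_apply_eq _⟩
  mul_mem' := by
    rintro A B ⟨hA, hA'⟩ ⟨hB, hB'⟩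
    refine ⟨hA.mul hB, fun i => ?_⟩
    rw [mul_apply, Finset.sum_eq_single_of_mem i (Finset.mem_univ i), hA', hB', one_mul]
    intro k _ hk
    rcases hk.lt_or_gt with hki | hik
    · rw [hA hki, zero_mul]
    · rw [hB hik, mul_zero]

variable {ι R : Type*} [Fintype ι] [LinearOrder ι] [Semiring R]

/-- Cutting unitriangular matrices down to the rows and columns in an interval. -/
def restrictIcc (i j : ι) : upperUnitriangular ι R →* Matrix (Set.Icc i j) (Set.Icc i j) R where
  toFun M := M.1.submatrix (↑) (↑)
  map_one' := submatrix_one _ Subtype.val_injective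
  map_mul' A B := by
    ext a b
    refine (Fintype.sum_of_injective _ Subtype.val_injective _ _ (fun k hk => ?_)
      fun _ => rfl).symm
    rw [Subtype.range_coe, Set.mem_Icc, not_and_or, not_le, not_le] at hk
    change A.1 a k * B.1 k b = 0
    rcases hk with hki | hjk
    · rw [A.2.1 (hki.trans_le a.2.1), zero_mul]
    · rw [B.2.1 (b.2.2.trans_lt hjk), mul_zero]

theorem exists_lt_apply_ne_zero_of_ne_one {M : upperUnitriangular ι R} (hM : M ≠ 1) :
    ∃ i j, i < j ∧ M.1 i j ≠ 0 := by
  contrapose! hM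
  ext i j
  rcases lt_trichotomy i j with hij | rfl | hji
  · rw [hM i j hij, OneMemClass.coe_one, one_apply_ne hij.ne]
  · rw [M.2.2, OneMemClass.coe_one, one_apply_eq]
  · rw [M.2.1 hji, OneMemClass.coe_one, one_apply_ne hji.ne']

theorem exists_minimal_lt_apply_ne_zero_of_ne_one {M : upperUnitriangular ι R} (hM : M ≠ 1) :
    ∃ i j, i < j ∧ M.1 i j ≠ 0 ∧
      ∀ a b, i ≤ a → b ≤ j → a < b → M.1 a b ≠ 0 → a = i ∧ b = j := by
  obtain ⟨i₀, j₀, h₀⟩ := exists_lt_apply_ne_zero_of_ne_one hM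
  obtain ⟨⟨i, j⟩, ⟨hij, hne⟩, hmin⟩ :=
    (Set.toFinite {p : ιᵒᵈ × ι | p.1.ofDual < p.2 ∧ M.1 p.1.ofDual p.2 ≠ 0}).exists_minimal
      ⟨(OrderDual.toDual i₀, j₀), h₀⟩
  refine ⟨i.ofDual, j, hij, hne, fun a b hia hbj hab habne => ?_⟩
  have hle := hmin (y := (OrderDual.toDual a, b)) ⟨hab, habne⟩ ⟨hia, hbj⟩
  exact ⟨le_antisymm hle.1 hia, le_antisymm hbj hle.2⟩

end Unitriangular

theorem exists_restrictIcc_eq_transvection {ι R : Type*} [Fintype ι] [LinearOrder ι] [CommRing R]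
    {M : upperUnitriangular ι R} (hM : M ≠ 1) :
    ∃ (i j : ι) (hij : i < j) (c : R), c ≠ 0 ∧ restrictIcc i j M =
      transvection ⟨i, Set.left_mem_Icc.2 hij.le⟩ ⟨j, Set.right_mem_Icc.2 hij.le⟩ c := by
  obtain ⟨i, j, hij, hne, hmin⟩ := exists_minimal_lt_apply_ne_zero_of_ne_one hM
  refine ⟨i, j, hij, M.1 i j, hne, ?_⟩
  ext ⟨a, ha⟩ ⟨b, hb⟩
  change M.1 a b = _
  by_cases hcorner : i = a ∧ j = b
  · obtain ⟨rfl, rfl⟩ := hcorner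
    simp [transvection, one_apply, hij.ne]
  · rcases lt_trichotomy a b with hab | rfl | hba
    · have : M.1 a b = 0 := by
        by_contra habne
        obtain ⟨rfl, rfl⟩ := hmin a b ha.1 hb.2 hab habne
        exact hcorner ⟨rfl, rfl⟩
      simp [transvection, one_apply, hcorner, hab.ne, this]
    · simp [transvection, hcorner, M.2.2]
    · simp [transvection, one_apply, hcorner, hba.ne', M.2.1 hba]

theorem exists_finite_orderOf_eq {G : Type*} [Group G] {ι : Type u} [Fintype ι] [LinearOrder ι]
    (ρ : G →* upperUnitriangular ι ℤ) {g : G} (hg : ρ g ≠ 1) {n : ℕ} (hn : n ≠ 0) :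
    ∃ (Q : Type u) (_ : Group Q) (_ : Finite Q) (φ : G →* Q), orderOf (φ g) = n := by
  obtain ⟨i, j, hij, c, hc, hM⟩ := exists_restrictIcc_eq_transvection hg
  have : NeZero (n * c.natAbs) := ⟨mul_ne_zero hn (Int.natAbs_ne_zero.2 hc)⟩
  let reduction := (Int.castRingHom (ZMod (n * c.natAbs))).mapMatrix (m := Set.Icc i j)
  let φ := (reduction.toMonoidHom.comp ((restrictIcc i j).comp ρ)).toHomUnits
  have hφ : (φ g : Matrix (Set.Icc i j) (Set.Icc i j) (ZMod (n * c.natAbs))) =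
      transvection ⟨i, Set.left_mem_Icc.2 hij.le⟩ ⟨j, Set.right_mem_Icc.2 hij.le⟩ (c : ZMod _) :=
    (congrArg reduction hM).trans (map_transvection _ c)
  refine ⟨_, inferInstance, inferInstance, φ, ?_⟩
  rw [← orderOf_units, hφ, orderOf_transvection (by simpa using hij.ne),
    addOrderOf_intCast_zmod_mul_natAbs hc n]

theorem map_partialProd {M N : Type*} [Monoid M] [Monoid N] (φ : M →* N) {r : ℕ} (f : Fin r → M)
    (k : Fin (r + 1)) : φ (Fin.partialProd f k) = Fin.partialProd (fun l => φ (f l)) k := by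
  induction k using Fin.induction with
  | zero => simp
  | succ k ih => rw [Fin.partialProd_succ, Fin.partialProd_succ, map_mul, ih]

theorem exists_partialProd_of_eq {α : Type*} {G : α → Type*} [∀ a, Monoid (G a)] (x : CoprodI G) :
    ∃ (r : ℕ) (s : Fin r → α) (y : ∀ k, G (s k)),
      (∀ k l : Fin r, l.castSucc = k.succ → s k ≠ s l) ∧ (∀ k, y k ≠ 1) ∧
        Fin.partialProd (fun k => CoprodI.of (y k)) (Fin.last r) = x := by
  classical
  obtain ⟨w, rfl⟩ := (CoprodI.Word.equiv (M := G)).symm.surjective x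
  refine ⟨w.toList.length, fun k => w.toList[k].1, fun k => w.toList[k].2, ?_,
    fun k => w.ne_one _ (List.getElem_mem _), ?_⟩
  · intro k l hkl
    have hl : (l : ℕ) = k + 1 := by simpa using congrArg Fin.val hkl
    have := List.isChain_iff_getElem.1 w.chain_ne k (by omega)
    simpa [hl] using this
  · have hofFn : List.ofFn (fun k : Fin w.toList.length => CoprodI.of w.toList[k].2) =
        w.toList.map fun p => CoprodI.of p.2 :=
      List.ofFn_getElem_eq_map w.toList fun p => CoprodI.of p.2
    rw [Fin.partialProd, hofFn, List.take_of_length_le (by simp)]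
    rfl

section Magnus

variable {α : Type*} [DecidableEq α] {r : ℕ} (s : Fin r → α)

/-- The sum of the matrix units `E k (k + 1)` over the positions `k` of the letter `a` in the
word `s`. It is described by its columns, the first of which vanishes. -/
def letterMatrix (a : α) : Matrix (Fin (r + 1)) (Fin (r + 1)) ℤ :=
  of fun i => Fin.cons 0 fun k => if s k = a ∧ i = k.castSucc then 1 else 0

theorem mul_letterMatrix_zero (P : Matrix (Fin (r + 1)) (Fin (r + 1)) ℤ) (a : α)
    (i : Fin (r + 1)) : (P * letterMatrix s a) i 0 = 0 := by
  simp [mul_apply, letterMatrix]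

theorem mul_letterMatrix_succ (P : Matrix (Fin (r + 1)) (Fin (r + 1)) ℤ) (a : α)
    (i : Fin (r + 1)) (k : Fin r) :
    (P * letterMatrix s a) i k.succ = if s k = a then P i k.castSucc else 0 := by
  simp [mul_apply, letterMatrix, ite_and]

theorem one_add_zsmul_letterMatrix_mem (a : α) (m : ℤ) :
    1 + m • letterMatrix s a ∈ upperUnitriangular (Fin (r + 1)) ℤ := by
  have hN : ∀ i j, j ≤ i → letterMatrix s a i j = 0 := by
    intro i j hji
    cases j using Fin.cases with
    | zero => rfl
    | succ k => simp [letterMatrix, (Fin.castSucc_lt_succ.trans_le hji).ne']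
  refine ⟨fun i j hji => ?_, fun i => ?_⟩
  · change (1 + m • letterMatrix s a) i j = 0
    rw [Matrix.add_apply, Matrix.smul_apply, hN i j hji.le, smul_zero, add_zero,
      one_apply_ne (show j < i from hji).ne']
  · rw [Matrix.add_apply, Matrix.smul_apply, hN i i le_rfl, smul_zero, add_zero, one_apply_eq]

variable {s}

theorem letterMatrix_mul_self (hs : ∀ k l : Fin r, l.castSucc = k.succ → s k ≠ s l) (a : α) :
    letterMatrix s a * letterMatrix s a = 0 := by
  ext i j
  cases j using Fin.cases with
  | zero => exact mul_letterMatrix_zero s _ a i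
  | succ k =>
    rw [mul_letterMatrix_succ, Matrix.zero_apply, ite_eq_right_iff]
    rintro rfl
    cases hk : k.castSucc using Fin.cases with
    | zero => rfl
    | succ l => simp [letterMatrix, hs l k hk]

/-- The representation of an infinite cyclic group whose generator acts by
`1 + letterMatrix s a`. -/
def letterHom (hs : ∀ k l : Fin r, l.castSucc = k.succ → s k ≠ s l) (a : α) :
    Multiplicative ℤ →* upperUnitriangular (Fin (r + 1)) ℤ where
  toFun m := ⟨1 + m.toAdd • letterMatrix s a, one_add_zsmul_letterMatrix_mem s a _⟩
  map_one' := by ext1; simp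
  map_mul' m m' := by
    ext1
    simp only [Submonoid.coe_mul, toAdd_mul, add_mul, mul_add, one_mul, mul_one, smul_mul_smul_comm,
      letterMatrix_mul_self hs, smul_zero, add_zero, add_smul, add_assoc]

/-- The image of `a₁ ^ e₁ ⋯ aₖ ^ eₖ`, where the `aᵢ` are the letters of `s`, under the
representation assembled from the `letterHom`s. -/
def syllableProd (s : Fin r → α) (e : Fin r → ℤ) :
    Fin (r + 1) → Matrix (Fin (r + 1)) (Fin (r + 1)) ℤ :=
  Fin.partialProd fun k => 1 + e k • letterMatrix s (s k)

theorem syllableProd_succ_apply_succ (e : Fin r → ℤ) (k l : Fin r) (i : Fin (r + 1)) :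
    syllableProd s e k.succ i l.succ = syllableProd s e k.castSucc i l.succ +
      e k * if s l = s k then syllableProd s e k.castSucc i l.castSucc else 0 := by
  simp only [syllableProd, Fin.partialProd_succ, mul_add, mul_one, mul_smul_comm, Matrix.add_apply,
    Matrix.smul_apply, mul_letterMatrix_succ, smul_eq_mul]

theorem syllableProd_apply_of_lt (e : Fin r → ℤ) {k j : Fin (r + 1)} (hkj : k < j) :
    syllableProd s e k 0 j = 0 := by
  induction k using Fin.induction generalizing j with
  | zero => rw [syllableProd, Fin.partialProd_zero, one_apply_ne hkj.ne]
  | succ k ih =>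
    obtain ⟨l, rfl⟩ := Fin.exists_succ_eq.2 (Fin.ne_zero_of_lt hkj)
    have hkl : k.castSucc < l.castSucc := by simpa using hkj
    rw [syllableProd_succ_apply_succ, ih (hkl.trans Fin.castSucc_lt_succ), ih hkl, ite_self,
      mul_zero, add_zero]

theorem syllableProd_apply_self_ne_zero {e : Fin r → ℤ} (he : ∀ k, e k ≠ 0) (k : Fin (r + 1)) :
    syllableProd s e k 0 k ≠ 0 := by
  induction k using Fin.induction with
  | zero => simp [syllableProd]
  | succ k ih =>
    rw [syllableProd_succ_apply_succ, syllableProd_apply_of_lt e Fin.castSucc_lt_succ, zero_add,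
      if_pos rfl]
    exact mul_ne_zero (he k) ih

end Magnus

theorem exists_upperUnitriangular_ne_one {α : Type*} {G : α → Type*} [∀ a, Monoid (G a)]
    {χ : ∀ a, G a →* Multiplicative ℤ} (hχ : ∀ a, Function.Injective (χ a))
    {x : CoprodI G} (hx : x ≠ 1) :
    ∃ (r : ℕ) (ρ : CoprodI G →* upperUnitriangular (Fin (r + 1)) ℤ), ρ x ≠ 1 := by
  classical
  obtain ⟨r, s, y, hs, hy, rfl⟩ := exists_partialProd_of_eq x
  have hr : Fin.last r ≠ 0 := by
    intro h
    rw [h, Fin.partialProd_zero] at hx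
    exact hx rfl
  let ρ := CoprodI.lift fun a => (letterHom hs a).comp (χ a)
  let e k := (χ (s k) (y k)).toAdd
  have he : ∀ k, e k ≠ 0 := fun k => by
    simpa [e] using (map_ne_one_iff _ (hχ _)).2 (hy k)
  have hρ : (ρ (Fin.partialProd (fun k => CoprodI.of (y k)) (Fin.last r))).1 =
      syllableProd s e (Fin.last r) := by
    refine (map_partialProd ((upperUnitriangular _ ℤ).subtype.comp ρ) _ _).trans ?_
    simp [ρ, e, letterHom, syllableProd]
  refine ⟨r, ρ, fun h => syllableProd_apply_self_ne_zero (s := s) he (Fin.last r) ?_⟩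
  rw [← hρ, h]
  exact Matrix.one_apply_ne (α := ℤ) hr.symm

theorem stmt2_general {α : Type*} : IsPotent (FreeGroup α) := by
  intro g n hn
  rcases eq_or_ne g 1 with rfl | hg
  · exact ⟨⊤, inferInstance, inferInstance, by simp⟩
  let E := freeGroupEquivCoprodI (ι := α)
  obtain ⟨r, ρ, hρ⟩ := exists_upperUnitriangular_ne_one
    (χ := fun _ => (FreeGroup.mulEquivIntOfUnique (α := Unit)).toMonoidHom)
    (fun _ => FreeGroup.mulEquivIntOfUnique.injective) (E.map_ne_one_iff.2 hg)
  obtain ⟨Q, _, _, φ, hφ⟩ :=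
    exists_finite_orderOf_eq (ρ.comp E.toMonoidHom) hρ (Nat.one_le_iff_ne_zero.1 hn)
  exact ⟨φ.ker, inferInstance, inferInstance, by rw [zpowers_inf_ker, hφ]⟩

theorem stmt2 {α : Type} (g : FreeGroup α) (n : ℕ) (hn : 1 ≤ n) :
    ∃ H : Subgroup (FreeGroup α), H.Normal ∧ H.FiniteIndex ∧
      Subgroup.zpowers g ⊓ H = Subgroup.zpowers (g ^ n) :=
  stmt2_general g n hn
end
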